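/- The connected components (in the Euclidean topology) of a semialgebraic subset of ℝⁿ are semialgebraic, and there are finitely many of them. -/

import Mathlib

/-- Semialgebraic subsets of `ι → ℝ`. -/
inductive IsSemialgebraic (ι : Type) [Fintype ι] : Set (ι → ℝ) → Prop
  | basic (p : MvPolynomial ι ℝ) : IsSemialgebraic ι {x | 0 < MvPolynomial.eval x p}
  | compl {s : Set (ι → ℝ)} : IsSemialgebraic ι s → IsSemialgebraic ι sᶜ
  | union {s t : Set (ι → ℝ)} : IsSemialgebraic ι s → IsSemialgebraic ι t →
      IsSemialgebraic ι (s ∪ t)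

/-!
Every finite family of polynomials is sign-invariant on each cell of some finite cover by connected
semialgebraic cells. A connected component of a semialgebraic set is then a union of cells.

Such covers come from induction on the dimension, in the spirit of Collins' cylindrical algebraic
decomposition. Enlarge the family so that it is closed under the derivative in one coordinate. Over
a cell on which the vanishing of its coefficients, and of certain determinants that count distinct
complex roots, is constant, complex roots can neither merge nor split. By conjugation, real roots
therefore stay real and vary continuously. By Thom's lemma, the sign conditions on a family closed
under derivatives cut out an interval in each fibre of the cylinder over the cell, so they define a
connected subset of the cylinder. These subsets are the new cells.
-/

/-! ## Semialgebraic sets and cell covers -/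

section CellCover

open MvPolynomial SignType

variable {ι : Type}

/-- Every polynomial of `F` has constant sign on `A`. -/
def SignInvariant (F : Finset (MvPolynomial ι ℝ)) (A : Set (ι → ℝ)) : Prop :=
  ∀ f ∈ F, ∀ x ∈ A, ∀ y ∈ A, sign (eval x f) = sign (eval y f)

namespace SignInvariant

variable {F G : Finset (MvPolynomial ι ℝ)} {A : Set (ι → ℝ)}

theorem mono (hG : SignInvariant G A) (hFG : F ⊆ G) : SignInvariant F A :=
  fun f hf => hG f (hFG hf)

theorem eval_eq_zero_iff (hF : SignInvariant F A) {f : MvPolynomial ι ℝ} (hf : f ∈ F)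
    {x y : ι → ℝ} (hx : x ∈ A) (hy : y ∈ A) : eval x f = 0 ↔ eval y f = 0 := by
  rw [← sign_eq_zero_iff, hF f hf x hx y hy, sign_eq_zero_iff]

end SignInvariant

variable [Fintype ι]

namespace IsSemialgebraic

theorem univ : IsSemialgebraic ι Set.univ := by
  simpa using basic (ι := ι) 1

theorem empty : IsSemialgebraic ι ∅ := by
  simpa using (univ (ι := ι)).compl

theorem inter {s t : Set (ι → ℝ)} (hs : IsSemialgebraic ι s) (ht : IsSemialgebraic ι t) :
    IsSemialgebraic ι (s ∩ t) := by
  simpa [Set.compl_union] using (hs.compl.union ht.compl).compl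

theorem sUnion {K : Set (Set (ι → ℝ))} (hK : K.Finite) (h : ∀ A ∈ K, IsSemialgebraic ι A) :
    IsSemialgebraic ι (⋃₀ K) := by
  induction K, hK using Set.Finite.induction_on with
  | empty => simpa using empty
  | insert _ _ ih =>
    rw [Set.sUnion_insert]
    exact (h _ (Set.mem_insert _ _)).union (ih fun A hA => h A (Set.mem_insert_of_mem _ hA))

theorem iInter {α : Type*} [Finite α] {s : α → Set (ι → ℝ)}
    (h : ∀ a, IsSemialgebraic ι (s a)) : IsSemialgebraic ι (⋂ a, s a) := by
  have hunion : IsSemialgebraic ι (⋃₀ Set.range fun a => (s a)ᶜ) :=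
    sUnion (Set.finite_range _) (Set.forall_mem_range.mpr fun a => (h a).compl)
  simpa [Set.sUnion_range, Set.compl_iUnion] using hunion.compl

theorem setOf_sign_eval_eq (p : MvPolynomial ι ℝ) (ε : SignType) :
    IsSemialgebraic ι {x | sign (eval x p) = ε} := by
  have hpos : IsSemialgebraic ι {x | sign (eval x p) = 1} := by
    simpa only [sign_eq_one_iff] using basic p
  have hneg : IsSemialgebraic ι {x | sign (eval x p) = -1} := by
    simpa only [map_neg, Left.neg_pos_iff, sign_eq_neg_one_iff] using basic (-p)
  cases ε with
  | pos => exact hpos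
  | neg => exact hneg
  | zero =>
    convert (hpos.union hneg).compl using 1
    ext x
    change sign (eval x p) = 0 ↔ ¬(sign (eval x p) = 1 ∨ sign (eval x p) = -1)
    generalize sign (eval x p) = σ
    revert σ
    decide

theorem preimage_comp {κ : Type} [Fintype κ] (e : ι → κ) {s : Set (ι → ℝ)}
    (hs : IsSemialgebraic ι s) : IsSemialgebraic κ ((fun y => y ∘ e) ⁻¹' s) := by
  induction hs with
  | basic p => simpa only [Set.preimage_ofPred_eq, eval_rename] using basic (rename e p)
  | compl _ ih => exact ih.compl
  | union _ _ ihs iht => exact ihs.union iht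

theorem exists_finset_subset_or_subset_compl {S : Set (ι → ℝ)} (hS : IsSemialgebraic ι S) :
    ∃ F : Finset (MvPolynomial ι ℝ), ∀ A, SignInvariant F A → A ⊆ S ∨ A ⊆ Sᶜ := by
  classical
  induction hS with
  | basic p =>
    refine ⟨{p}, fun A hA => or_iff_not_imp_right.mpr fun hAp y hy => ?_⟩
    obtain ⟨x, hx, hxp⟩ := Set.not_subset.mp hAp
    rw [Set.notMem_compl_iff] at hxp
    have hsign := hA p (Finset.mem_singleton_self p) y hy x hx
    exact sign_eq_one_iff.mp (hsign.trans (sign_pos hxp))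
  | compl _ ih =>
    obtain ⟨F, hF⟩ := ih
    exact ⟨F, fun A hA => by simpa only [compl_compl] using (hF A hA).symm⟩
  | union _ _ ihs iht =>
    obtain ⟨F, hF⟩ := ihs
    obtain ⟨G, hG⟩ := iht
    refine ⟨F ∪ G, fun A hA => ?_⟩
    rw [Set.compl_union]
    rcases hF A (hA.mono Finset.subset_union_left) with hs | hs
    · exact Or.inl (hs.trans Set.subset_union_left)
    · exact (hG A (hA.mono Finset.subset_union_right)).imp
        (fun ht => ht.trans Set.subset_union_right) (Set.subset_inter hs)

end IsSemialgebraic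

/-- A finite cover of `ι → ℝ` by connected semialgebraic sets on each of which every polynomial
of `F` has constant sign. The cells may be empty and need not be disjoint. -/
structure IsCellCover (F : Finset (MvPolynomial ι ℝ)) (K : Set (Set (ι → ℝ))) : Prop where
  finite : K.Finite
  isSemialgebraic : ∀ A ∈ K, IsSemialgebraic ι A
  isPreconnected : ∀ A ∈ K, IsPreconnected A
  signInvariant : ∀ A ∈ K, SignInvariant F A
  exists_mem : ∀ x, ∃ A ∈ K, x ∈ A

theorem connectedComponentIn_eq_sUnion {X : Type*} [TopologicalSpace X] {S : Set X}
    {K : Set (Set X)} (hpre : ∀ A ∈ K, IsPreconnected A) (hcover : ∀ x, ∃ A ∈ K, x ∈ A)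
    (hsplit : ∀ A ∈ K, A ⊆ S ∨ A ⊆ Sᶜ) (x : X) :
    connectedComponentIn S x = ⋃₀ {A ∈ K | A ⊆ connectedComponentIn S x} := by
  refine subset_antisymm (fun y hy => ?_) (Set.sUnion_subset fun A hA => hA.2)
  obtain ⟨A, hA, hyA⟩ := hcover y
  have hyS : y ∈ S := connectedComponentIn_subset _ _ hy
  have hAS : A ⊆ S := (hsplit A hA).resolve_right fun h => h hyA hyS
  refine ⟨A, ⟨hA, ?_⟩, hyA⟩
  rw [connectedComponentIn_eq hy]
  exact (hpre A hA).subset_connectedComponentIn hyA hAS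

end CellCover

/-! ## Thom's lemma -/

section Thom

open Polynomial SignType

theorem sign_eval_eq_of_sign_eval_derivative_eq {f : ℝ[X]} {s t : ℝ} {σ : SignType}
    (hder : ∀ u ∈ Set.Icc s t, sign ((derivative f).eval u) = σ)
    (hst : sign (f.eval s) = sign (f.eval t)) {u : ℝ} (hu : u ∈ Set.Icc s t) :
    sign (f.eval u) = sign (f.eval s) := by
  wlog hσ : 0 ≤ σ generalizing f σ
  · have hneg := this (f := -f) (σ := -σ)
      (fun v hv => by rw [derivative_neg, eval_neg, Left.sign_neg, hder v hv])
      (by rw [eval_neg, eval_neg, Left.sign_neg, Left.sign_neg, hst])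
      (by clear hder; decide +revert)
    simpa only [eval_neg, Left.sign_neg, neg_inj] using hneg
  have hmono : MonotoneOn (fun v => f.eval v) (Set.Icc s t) := by
    refine monotoneOn_of_deriv_nonneg (convex_Icc s t) f.continuousOn
      f.differentiable.differentiableOn fun v hv => ?_
    rw [Polynomial.deriv, ← sign_nonneg_iff, hder v (interior_subset hv)]
    exact hσ
  have hs : s ∈ Set.Icc s t := Set.left_mem_Icc.mpr (hu.1.trans hu.2)
  have ht : t ∈ Set.Icc s t := Set.right_mem_Icc.mpr (hu.1.trans hu.2)
  refine le_antisymm ?_ (SignType.sign.monotone (hmono hs hu hu.1))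
  rw [hst]
  exact SignType.sign.monotone (hmono hu ht hu.2)

theorem thom_sign_eval_eq {G : Set ℝ[X]} (hG : ∀ g ∈ G, derivative g ∈ G) {s t : ℝ}
    (hst : ∀ g ∈ G, sign (g.eval s) = sign (g.eval t)) {u : ℝ} (hu : u ∈ Set.Icc s t)
    {g : ℝ[X]} (hg : g ∈ G) : sign (g.eval u) = sign (g.eval s) := by
  induction hN : g.natDegree using Nat.strong_induction_on generalizing g u with
  | _ N ih =>
    subst hN
    by_cases hdeg : g.natDegree = 0
    · obtain ⟨c, rfl⟩ := natDegree_eq_zero.mp hdeg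
      rw [eval_C, eval_C]
    · exact sign_eval_eq_of_sign_eval_derivative_eq
        (fun v hv => ih _ (natDegree_derivative_lt hdeg) hv (hG g hg) rfl) (hst g hg) hu

end Thom

/-! ## Connectedness of a total space with connected fibres -/

section Fibres

open Topology Filter

theorem preconnectedSpace_of_isOpenMap {E X : Type*} [TopologicalSpace E] [TopologicalSpace X]
    [PreconnectedSpace X] {f : E → X} (hf : Continuous f) (hopen : IsOpenMap f)
    (hclosed : IsClosed (Set.range f)) (hfib : ∀ x, IsPreconnected (f ⁻¹' {x})) :
    PreconnectedSpace E := by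
  rcases isClopen_iff.mp (⟨hclosed, hopen.isOpen_range⟩ : IsClopen (Set.range f)) with h | h
  · have : IsEmpty E := Set.range_eq_empty_iff.mp h
    infer_instance
  · have hsurj : Function.Surjective f := Set.range_eq_univ.mp h
    rcases isEmpty_or_nonempty X with hX | hX
    · have : IsEmpty E := f.isEmpty
      infer_instance
    have : ConnectedSpace X := ⟨hX⟩
    have hconn := (hopen.isQuotientMap hf hsurj).isCoinducing.isConnected_preimage_of_isClosed
      (fun x => ⟨hsurj x, hfib x⟩) isClosed_univ isConnected_univ
    exact ⟨hconn.isPreconnected⟩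

theorem eventually_forall_dist_lt {X M : Type*} [TopologicalSpace X] [PseudoMetricSpace M]
    {C : X × M → Prop} {x₀ : X} {t₀ : M} (h : ∀ᶠ q in 𝓝 (x₀, t₀), C q) :
    ∀ᶠ r in 𝓝[>] (0 : ℝ), ∀ᶠ x in 𝓝 x₀, ∀ t, dist t t₀ < r → C (x, t) := by
  rw [nhds_prod_eq, eventually_prod_iff] at h
  obtain ⟨A, hA, B, hB, hAB⟩ := h
  obtain ⟨ε, hε, hball⟩ := Metric.eventually_nhds_iff.mp hB
  filter_upwards [Ioo_mem_nhdsGT hε] with r hr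
  filter_upwards [hA] with x hx t ht
  exact hAB hx (hball (ht.trans hr.2))

theorem isPreconnected_of_forall_fiber {X M : Type*} [TopologicalSpace X] [PreconnectedSpace X]
    [PseudoMetricSpace M] {C : Set (X × M)}
    (hopen : ∀ x₀ t₀, (x₀, t₀) ∈ C → ∀ r > 0, ∀ᶠ x in 𝓝 x₀, ∃ t, dist t t₀ < r ∧ (x, t) ∈ C)
    (hclosed : ∀ x₀, ∀ᶠ x in 𝓝 x₀, ∀ t, (x, t) ∈ C → ∃ t', (x₀, t') ∈ C)
    (hfib : ∀ x, IsPreconnected {t | (x, t) ∈ C}) : IsPreconnected C := by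
  rw [isPreconnected_iff_preconnectedSpace]
  refine preconnectedSpace_of_isOpenMap (f := fun q : C => q.1.1)
    (continuous_fst.comp continuous_subtype_val) ?_ ?_ fun x => ?_
  · refine isOpenMap_iff_nhds_le.mpr ?_
    rintro ⟨⟨x₀, t₀⟩, hC⟩ V hV
    obtain ⟨U, hU, hUV⟩ := mem_nhds_subtype _ _ _ |>.mp hV
    obtain ⟨r, hr, hrpos⟩ :=
      ((eventually_forall_dist_lt hU).and (self_mem_nhdsWithin (s := Set.Ioi (0 : ℝ)))).exists
    filter_upwards [hr, hopen x₀ t₀ hC r hrpos] with x hx hxC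
    obtain ⟨t, ht, htC⟩ := hxC
    exact @hUV ⟨(x, t), htC⟩ (hx t ht)
  · rw [← isOpen_compl_iff, isOpen_iff_eventually]
    intro x₀ hx₀
    filter_upwards [hclosed x₀] with x hx
    rintro ⟨⟨⟨_, t⟩, hC⟩, rfl⟩
    obtain ⟨t', ht'⟩ := hx t hC
    exact hx₀ ⟨⟨(x₀, t'), ht'⟩, rfl⟩
  · rw [← Topology.IsInducing.subtypeVal.isPreconnected_image]
    convert (hfib x).image (Prod.mk x) (Continuous.prodMk_right x).continuousOn using 1
    ext ⟨y, t⟩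
    constructor
    · rintro ⟨⟨_, hC⟩, rfl, rfl⟩
      exact ⟨t, hC, rfl⟩
    · rintro ⟨t, hC, h⟩
      obtain ⟨rfl, rfl⟩ := Prod.mk.inj h
      exact ⟨⟨_, hC⟩, rfl, rfl⟩

end Fibres

/-! ## Counting distinct complex roots by determinants -/

section RootCount

open Polynomial Matrix

section AlgClosed

variable {K : Type*} [Field K] [CharZero K]

theorem natDegree_radical_le_card_roots [IsAlgClosed K] [DecidableEq K] {q : K[X]} (hq : q ≠ 0) :
    (UniqueFactorizationMonoid.radical q).natDegree ≤ q.roots.toFinset.card := by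
  set v := UniqueFactorizationMonoid.radical q
  have hsep : v.Separable := PerfectField.separable_iff_squarefree.mpr
    UniqueFactorizationMonoid.squarefree_radical
  calc v.natDegree = v.roots.card := (IsAlgClosed.splits v).natDegree_eq_card_roots
    _ = v.roots.toFinset.card := (Multiset.toFinset_card_of_nodup (nodup_roots hsep)).symm
    _ ≤ q.roots.toFinset.card := Finset.card_le_card <| Multiset.toFinset_subset.mpr <|
      Multiset.subset_of_le <| roots.le_of_dvd hq UniqueFactorizationMonoid.radical_dvd_self

theorem roots_subset_of_dvd_mul_derivative {q v : K[X]} (hq : q ≠ 0) (hv : v ≠ 0)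
    (hdvd : q ∣ v * derivative q) : q.roots ⊆ v.roots := by
  intro z hz
  have hroot : q.IsRoot z := isRoot_of_mem_roots hz
  have hmul : 0 < q.rootMultiplicity z := (rootMultiplicity_pos hq).mpr hroot
  have hder : derivative q ≠ 0 := by
    intro h
    obtain ⟨c, rfl⟩ := natDegree_eq_zero.mp (derivative_eq_zero.mp h)
    simp at hz
  have hle := rootMultiplicity_le_rootMultiplicity_of_dvd (mul_ne_zero hv hder) hdvd z
  rw [rootMultiplicity_mul (mul_ne_zero hv hder), derivative_rootMultiplicity_of_root hroot] at hle
  exact (mem_roots hv).mpr ((rootMultiplicity_pos hv).mp (by omega))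

/-- The pairs `(v, u)` are the syzygies of `(q', q)`; the minimal nonzero `v` is the radical of
`q`, whose degree is the number of distinct roots. -/
theorem card_roots_le_iff_exists_syzygy [IsAlgClosed K] [DecidableEq K] {q : K[X]} (hq : q ≠ 0)
    {r : ℕ} :
    q.roots.toFinset.card ≤ r ↔ ∃ v u : K[X], (v ≠ 0 ∨ u ≠ 0) ∧ v.natDegree ≤ r ∧
      u.natDegree ≤ r ∧ v * derivative q + u * q = 0 := by
  constructor
  · intro hr
    set v := UniqueFactorizationMonoid.radical q
    have hdvd : q ∣ v * derivative q := by
      conv_lhs => rw [← EuclideanDomain.radical_mul_divRadical (a := q)]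
      exact mul_dvd_mul_left v (divRadical_dvd_derivative q)
    obtain ⟨u, hu⟩ := hdvd
    have hvr : v.natDegree ≤ r := (natDegree_radical_le_card_roots hq).trans hr
    refine ⟨v, -u, Or.inl UniqueFactorizationMonoid.radical_ne_zero, hvr, ?_, ?_⟩
    · rcases eq_or_ne u 0 with rfl | hu0
      · simp
      have hdeg : q.natDegree + u.natDegree ≤ v.natDegree + q.natDegree := by
        rw [← natDegree_mul hq hu0, ← hu]
        exact natDegree_mul_le.trans <|
          Nat.add_le_add_left ((natDegree_derivative_le q).trans (Nat.sub_le _ _)) _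
      rw [natDegree_neg]
      omega
    · rw [hu]
      ring
  · rintro ⟨v, u, hvu, hvr, -, hsyz⟩
    have hv : v ≠ 0 := by
      rintro rfl
      simp_all
    have hdvd : q ∣ v * derivative q := ⟨-u, by linear_combination hsyz⟩
    calc q.roots.toFinset.card ≤ v.roots.toFinset.card := Finset.card_le_card <|
          Multiset.toFinset_subset.mpr (roots_subset_of_dvd_mul_derivative hq hv hdvd)
      _ ≤ v.roots.card := Multiset.toFinset_card_le _
      _ ≤ v.natDegree := card_roots' v
      _ ≤ r := hvr

end AlgClosed

variable {R S : Type*} [CommRing R] [CommRing S]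

/-- The matrix of `(v, u) ↦ v * q' + u * q` on pairs of polynomials of degree at most `r`, in the
monomial bases. -/
noncomputable def syzygyMatrix (q : R[X]) (r : ℕ) :
    Matrix (Fin (q.natDegree + r + 1)) (Fin (r + 1) ⊕ Fin (r + 1)) R :=
  Matrix.of fun k => Sum.elim (fun i => (X ^ (i : ℕ) * derivative q).coeff k)
    (fun i => (X ^ (i : ℕ) * q).coeff k)

/-- The Gram determinant of `syzygyMatrix q r`. -/
noncomputable def syzygyGram (q : R[X]) (r : ℕ) : R :=
  ((syzygyMatrix q r)ᵀ * syzygyMatrix q r).det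

theorem syzygyMatrix_map_mulVec [DecidableEq S] (φ : R →+* S) (q : R[X]) (r : ℕ)
    (v u : Fin (r + 1) → S) (k : Fin (q.natDegree + r + 1)) :
    ((syzygyMatrix q r).map φ *ᵥ Sum.elim v u) k =
      (ofFn (r + 1) v * derivative (q.map φ) + ofFn (r + 1) u * q.map φ).coeff k := by
  simp only [mulVec, dotProduct, Fintype.sum_sum_type, map_apply, syzygyMatrix, of_apply,
    Sum.elim_inl, Sum.elim_inr, ← coeff_map, Polynomial.map_mul, Polynomial.map_pow, map_X,
    ← derivative_map, ofFn_eq_sum_monomial, ← C_mul_X_pow_eq_monomial, Finset.sum_mul, mul_assoc,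
    coeff_add, finsetSum_coeff, coeff_C_mul, mul_comm _ (v _), mul_comm _ (u _)]

theorem syzygyMatrix_map_mulVec_eq_zero_iff [DecidableEq S] (φ : R →+* S) (q : R[X]) (r : ℕ)
    (v u : Fin (r + 1) → S) :
    (syzygyMatrix q r).map φ *ᵥ Sum.elim v u = 0 ↔
      ofFn (r + 1) v * derivative (q.map φ) + ofFn (r + 1) u * q.map φ = 0 := by
  constructor
  · intro h
    have hv : (ofFn (r + 1) v).natDegree < r + 1 := ofFn_natDegree_lt (Nat.le_add_left 1 r) v
    have hu : (ofFn (r + 1) u).natDegree < r + 1 := ofFn_natDegree_lt (Nat.le_add_left 1 r) u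
    have hq : (q.map φ).natDegree ≤ q.natDegree := natDegree_map_le
    have hq' := natDegree_derivative_le (q.map φ)
    have hdeg : (ofFn (r + 1) v * derivative (q.map φ) +
        ofFn (r + 1) u * q.map φ).natDegree ≤ q.natDegree + r :=
      natDegree_add_le_of_degree_le (natDegree_mul_le.trans (by omega))
        (natDegree_mul_le.trans (by omega))
    ext k
    by_cases hk : k < q.natDegree + r + 1
    · simpa only [syzygyMatrix_map_mulVec, Pi.zero_apply, coeff_zero] using congrFun h ⟨k, hk⟩
    · rw [coeff_zero, coeff_eq_zero_of_natDegree_lt (by omega)]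
  · intro h
    ext k
    rw [syzygyMatrix_map_mulVec, h, coeff_zero, Pi.zero_apply]

theorem exists_syzygyMatrix_map_mulVec_eq_zero_iff (φ : R →+* S) (q : R[X]) (r : ℕ) :
    (∃ w, w ≠ 0 ∧ (syzygyMatrix q r).map φ *ᵥ w = 0) ↔
      ∃ v u : S[X], (v ≠ 0 ∨ u ≠ 0) ∧ v.natDegree ≤ r ∧ u.natDegree ≤ r ∧
        v * derivative (q.map φ) + u * q.map φ = 0 := by
  classical
  have hdeg (v : Fin (r + 1) → S) : (ofFn (r + 1) v).natDegree ≤ r :=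
    Nat.lt_succ_iff.mp (ofFn_natDegree_lt (Nat.le_add_left 1 r) v)
  constructor
  · rintro ⟨w, hw, hker⟩
    obtain ⟨v, u, rfl⟩ : ∃ v u, w = Sum.elim v u := ⟨_, _, (Sum.elim_comp_inl_inr w).symm⟩
    refine ⟨_, _, ?_, hdeg v, hdeg u, (syzygyMatrix_map_mulVec_eq_zero_iff φ q r v u).mp hker⟩
    contrapose! hw
    rw [map_eq_zero_iff _ (injective_ofFn _), map_eq_zero_iff _ (injective_ofFn _)] at hw
    rw [hw.1, hw.2, Sum.elim_zero_zero]
  · rintro ⟨v, u, hvu, hv, hu, hsyz⟩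
    have hofv := ofFn_comp_toFn_eq_id_of_natDegree_lt (Nat.lt_succ_of_le hv)
    have hofu := ofFn_comp_toFn_eq_id_of_natDegree_lt (Nat.lt_succ_of_le hu)
    refine ⟨Sum.elim (toFn (r + 1) v) (toFn (r + 1) u), ?_, ?_⟩
    · contrapose! hvu
      rw [← hofv, ← hofu, map_eq_zero_iff _ (injective_ofFn _),
        map_eq_zero_iff _ (injective_ofFn _)]
      exact ⟨funext fun i => congrFun hvu (Sum.inl i), funext fun i => congrFun hvu (Sum.inr i)⟩
    · rw [syzygyMatrix_map_mulVec_eq_zero_iff, ← hsyz]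
      exact congrArg₂ _ (congrArg (· * _) hofv) (congrArg (· * _) hofu)

open scoped ComplexOrder in
theorem map_det_transpose_mul_self_eq_zero_iff {m n : Type*} [Fintype m] [Fintype n]
    [DecidableEq n] (φ : R →+* ℝ) (M : Matrix m n R) :
    φ (Mᵀ * M).det = 0 ↔ ∃ w, w ≠ 0 ∧ M.map (Complex.ofRealHom.comp φ) *ᵥ w = 0 := by
  set N := M.map (Complex.ofRealHom.comp φ) with hN
  have hstar : Nᴴ = (Mᵀ).map (Complex.ofRealHom.comp φ) := by
    ext i j
    simp [hN]
  have hdet : (φ (Mᵀ * M).det : ℂ) = (Nᴴ * N).det := by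
    rw [hstar, hN, ← Matrix.map_mul]
    exact (Complex.ofRealHom.comp φ).map_det _
  rw [← Complex.ofReal_eq_zero, hdet, ← exists_mulVec_eq_zero_iff]
  exact exists_congr fun w => and_congr_right fun _ => conjTranspose_mul_self_mulVec_eq_zero N w

/-- The distinct complex roots of a real polynomial; empty for the zero polynomial. -/
noncomputable def complexRoots (q : ℝ[X]) : Finset ℂ :=
  (q.aroots ℂ).toFinset

theorem mem_complexRoots {q : ℝ[X]} (hq : q ≠ 0) {z : ℂ} :
    z ∈ complexRoots q ↔ aeval z q = 0 := by
  rw [complexRoots, Multiset.mem_toFinset, mem_aroots, and_iff_right hq]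

theorem ofReal_mem_complexRoots {q : ℝ[X]} (hq : q ≠ 0) {t : ℝ} :
    (t : ℂ) ∈ complexRoots q ↔ q.eval t = 0 := by
  rw [mem_complexRoots hq, ← Complex.coe_algebraMap, aeval_algebraMap_apply_eq_algebraMap_eval,
    Complex.coe_algebraMap, Complex.ofReal_eq_zero]

theorem conj_mem_complexRoots {q : ℝ[X]} (hq : q ≠ 0) {z : ℂ} (hz : z ∈ complexRoots q) :
    starRingEnd ℂ z ∈ complexRoots q := by
  rw [mem_complexRoots hq] at hz ⊢
  rw [aeval_conj, hz, map_zero]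

theorem card_complexRoots_le_natDegree (q : ℝ[X]) : (complexRoots q).card ≤ q.natDegree :=
  (Multiset.toFinset_card_le _).trans ((card_roots' _).trans natDegree_map_le)

theorem map_syzygyGram_eq_zero_iff (φ : R →+* ℝ) {q : R[X]} (hq : q.map φ ≠ 0) {r : ℕ} :
    φ (syzygyGram q r) = 0 ↔ (complexRoots (q.map φ)).card ≤ r := by
  have hmap : (q.map φ).map (algebraMap ℝ ℂ) = q.map (Complex.ofRealHom.comp φ) :=
    Polynomial.map_map _ _ _
  have hq' : q.map (Complex.ofRealHom.comp φ) ≠ 0 := hmap ▸ map_ne_zero hq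
  rw [syzygyGram, map_det_transpose_mul_self_eq_zero_iff,
    exists_syzygyMatrix_map_mulVec_eq_zero_iff, ← card_roots_le_iff_exists_syzygy hq',
    complexRoots, aroots_def, hmap]

theorem card_complexRoots_eq_of_syzygyGram {φ ψ : R →+* ℝ} {q : R[X]} (hφ : q.map φ ≠ 0)
    (hψ : q.map ψ ≠ 0)
    (h : ∀ r ≤ q.natDegree, φ (syzygyGram q r) = 0 ↔ ψ (syzygyGram q r) = 0) :
    (complexRoots (q.map φ)).card = (complexRoots (q.map ψ)).card := by
  have hle (χ : R →+* ℝ) : (complexRoots (q.map χ)).card ≤ q.natDegree :=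
    (card_complexRoots_le_natDegree _).trans natDegree_map_le
  refine le_antisymm ?_ ?_
  · rw [← map_syzygyGram_eq_zero_iff φ hφ, h _ (hle ψ), map_syzygyGram_eq_zero_iff ψ hψ]
  · rw [← map_syzygyGram_eq_zero_iff ψ hψ, ← h _ (hle φ), map_syzygyGram_eq_zero_iff φ hφ]

end RootCount

/-! ## Perturbation of roots -/

section RootPerturbation

open Polynomial Filter Topology

/-- A family of nonzero polynomials of constant degree with continuous coefficients. -/
structure IsEquidegreeFamily {X K : Type*} [TopologicalSpace X] [Semiring K] [TopologicalSpace K]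
    (p : X → K[X]) : Prop where
  continuous_coeff : ∀ k, Continuous fun x => (p x).coeff k
  ne_zero : ∀ x, p x ≠ 0
  natDegree_eq : ∀ x y, (p x).natDegree = (p y).natDegree

theorem IsEquidegreeFamily.continuous_aeval {X K L : Type*} [TopologicalSpace X] [CommSemiring K]
    [TopologicalSpace K] [Semiring L] [Algebra K L] [TopologicalSpace L] [IsTopologicalSemiring L]
    [ContinuousSMul K L] {p : X → K[X]} (hp : IsEquidegreeFamily p) :
    Continuous fun q : X × L => aeval q.2 (p q.1) := by
  rcases isEmpty_or_nonempty X with _ | ⟨⟨x₀⟩⟩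
  · exact continuous_of_discreteTopology
  simp only [aeval_eq_sum_range, hp.natDegree_eq _ x₀]
  refine continuous_finsetSum _ fun k _ => ?_
  exact ((hp.continuous_coeff k).comp continuous_fst).smul (continuous_snd.pow k)

theorem exists_mem_roots_dist_lt {K : Type*} [NormedField K] {p : K[X]} (hp : p.Splits) {z : K}
    {r : ℝ} (hr : 0 ≤ r) (hz : ‖p.eval z‖ < ‖p.leadingCoeff‖ * r ^ p.natDegree) :
    ∃ w ∈ p.roots, dist w z < r := by
  by_contra! hfar
  refine hz.not_ge ?_
  calc ‖p.leadingCoeff‖ * r ^ p.natDegree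
      = ‖p.leadingCoeff‖ * (p.roots.map fun _ => r).prod := by
        rw [Multiset.map_const', Multiset.prod_replicate, hp.natDegree_eq_card_roots]
    _ ≤ ‖p.leadingCoeff‖ * (p.roots.map fun w => ‖z - w‖).prod := by
        gcongr
        refine Multiset.prod_map_le_prod_map₀ _ _ (fun _ _ => hr) fun w hw => ?_
        rw [← dist_eq_norm, dist_comm]
        exact hfar w hw
    _ = ‖p.eval z‖ := by
        rw [hp.eval_eq_prod_roots, norm_mul, ← normHom_apply (Multiset.prod _),
          map_multiset_prod, Multiset.map_map]
        rfl

variable {X : Type*} [TopologicalSpace X] {P : X → ℝ[X]} {x₀ : X}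

theorem IsEquidegreeFamily.eventually_exists_mem_complexRoots (hP : IsEquidegreeFamily P)
    {z : ℂ} (hz : z ∈ complexRoots (P x₀)) {r : ℝ} (hr : 0 < r) :
    ∀ᶠ x in 𝓝 x₀, ∃ w ∈ complexRoots (P x), dist w z < r := by
  set d := (P x₀).natDegree
  have hlc : ‖aeval z (P x₀)‖ < ‖(P x₀).coeff d‖ * r ^ d := by
    rw [(mem_complexRoots (hP.ne_zero x₀)).mp hz, norm_zero]
    have : (P x₀).coeff d ≠ 0 := leadingCoeff_ne_zero.mpr (hP.ne_zero x₀)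
    positivity
  have hleft : Continuous fun x => ‖aeval z (P x)‖ :=
    (hP.continuous_aeval.comp (Continuous.prodMk_left z)).norm
  have hright : Continuous fun x => ‖(P x).coeff d‖ * r ^ d :=
    (hP.continuous_coeff d).norm.mul continuous_const
  filter_upwards [hleft.continuousAt.eventually_lt hright.continuousAt hlc] with x hx
  obtain ⟨w, hw, hwz⟩ := exists_mem_roots_dist_lt (z := z)
    (IsAlgClosed.splits ((P x).map (algebraMap ℝ ℂ))) hr.le (by
      rw [eval_map_algebraMap, leadingCoeff_map, natDegree_map, norm_algebraMap', leadingCoeff,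
        hP.natDegree_eq x x₀]
      exact hx)
  exact ⟨w, Multiset.mem_toFinset.mpr hw, hwz⟩

theorem exists_dist_lt_and_eq_of_card_le {M : Type*} [PseudoMetricSpace M] {Z W : Finset M} {r : ℝ}
    (hsep : ∀ z ∈ Z, ∀ z' ∈ Z, dist z z' < 2 * r → z = z')
    (hnear : ∀ z ∈ Z, ∃ w ∈ W, dist w z < r) (hcard : W.card ≤ Z.card) :
    (∀ w ∈ W, ∃ z ∈ Z, dist w z < r) ∧
      ∀ z ∈ Z, ∀ w ∈ W, ∀ w' ∈ W, dist w z < r → dist w' z < r → w = w' := by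
  choose! f hfW hf using hnear
  have heq {w z z' : M} (hz : z ∈ Z) (hz' : z' ∈ Z) (h : dist w z < r) (h' : dist w z' < r) :
      z = z' :=
    hsep z hz z' hz' (by linarith [dist_triangle_left z z' w])
  have hinj : Set.InjOn f Z := fun z hz z' hz' hzz' =>
    heq hz hz' (hf z hz) (by rw [hzz']; exact hf z' hz')
  have hsurj : Set.SurjOn f Z W := Finset.surjOn_of_injOn_of_card_le f hfW hinj hcard
  refine ⟨fun w hw => ?_, fun z hz w hw w' hw' hwz hw'z => ?_⟩
  · obtain ⟨z, hz, rfl⟩ := hsurj hw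
    exact ⟨z, hz, hf z hz⟩
  · obtain ⟨y, hy, rfl⟩ := hsurj hw
    obtain ⟨y', hy', rfl⟩ := hsurj hw'
    rw [heq hy hz (hf y hy) hwz, heq hy' hz (hf y' hy') hw'z]

/-- The polynomial `q` is a perturbation of `p` that moves real roots to real roots by less than
`r`, where `r` is small enough for the `r`-neighbourhoods of the real roots of `p` to be disjoint
and to contain a single complex root of `q` each. -/
structure IsRootPerturbation (r : ℝ) (p q : ℝ[X]) : Prop where
  eq_of_dist_lt : ∀ ξ, p.IsRoot ξ → ∀ η, p.IsRoot η → dist ξ η < 2 * r → ξ = η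
  exists_isRoot_right : ∀ ξ, p.IsRoot ξ → ∃ t, q.IsRoot t ∧ dist t ξ < r
  exists_isRoot_left : ∀ t, q.IsRoot t → ∃ ξ, p.IsRoot ξ ∧ dist t ξ < r
  complexRoot_unique : ∀ ξ : ℝ, p.IsRoot ξ → ∀ z ∈ complexRoots q, ∀ w ∈ complexRoots q,
    dist z ξ < r → dist w ξ < r → z = w

theorem IsRootPerturbation.root_unique {r : ℝ} {p q : ℝ[X]} (h : IsRootPerturbation r p q)
    (hq : q ≠ 0) {ξ s t : ℝ} (hξ : p.IsRoot ξ) (hs : q.IsRoot s) (ht : q.IsRoot t)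
    (hsξ : dist s ξ < r) (htξ : dist t ξ < r) : s = t :=
  Complex.ofReal_injective <| h.complexRoot_unique ξ hξ s ((ofReal_mem_complexRoots hq).mpr hs) t
    ((ofReal_mem_complexRoots hq).mpr ht) (by rwa [Complex.isometry_ofReal.dist_eq])
    (by rwa [Complex.isometry_ofReal.dist_eq])

theorem dist_conj_ofReal (z : ℂ) (t : ℝ) : dist (starRingEnd ℂ z) t = dist z t := by
  rw [← Complex.conj_ofReal t, Complex.dist_conj_conj, Complex.conj_ofReal]

theorem isRootPerturbation_of_complexRoots {r : ℝ} {p q : ℝ[X]} (hp : p ≠ 0) (hq : q ≠ 0)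
    (hsep : ∀ z ∈ complexRoots p, ∀ z' ∈ complexRoots p, dist z z' < 2 * r → z = z')
    (hnear : ∀ z ∈ complexRoots p, ∃ w ∈ complexRoots q, dist w z < r)
    (hcard : (complexRoots q).card ≤ (complexRoots p).card) : IsRootPerturbation r p q := by
  obtain ⟨hback, huniq⟩ := exists_dist_lt_and_eq_of_card_le hsep hnear hcard
  have hdist := Complex.isometry_ofReal.dist_eq
  refine ⟨fun ξ hξ η hη hξη => ?_, fun ξ hξ => ?_, fun t ht => ?_, fun ξ hξ => ?_⟩
  · exact Complex.ofReal_injective <| hsep ξ ((ofReal_mem_complexRoots hp).mpr hξ) η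
      ((ofReal_mem_complexRoots hp).mpr hη) (by rwa [hdist])
  · have hξ' := (ofReal_mem_complexRoots hp).mpr hξ
    obtain ⟨w, hw, hwξ⟩ := hnear ξ hξ'
    have hreal := huniq ξ hξ' _ (conj_mem_complexRoots hq hw) w hw
      (by rwa [dist_conj_ofReal]) hwξ
    obtain ⟨t, rfl⟩ := Complex.conj_eq_iff_real.mp hreal
    exact ⟨t, (ofReal_mem_complexRoots hq).mp hw, by rwa [hdist] at hwξ⟩
  · obtain ⟨z, hz, htz⟩ := hback t ((ofReal_mem_complexRoots hq).mpr ht)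
    rw [dist_comm] at htz
    have hreal := hsep _ (conj_mem_complexRoots hp hz) z hz <| calc
      dist (starRingEnd ℂ z) z ≤ dist (starRingEnd ℂ z) t + dist z t := dist_triangle_right _ _ _
      _ < 2 * r := by rw [dist_conj_ofReal]; linarith
    obtain ⟨ξ, rfl⟩ := Complex.conj_eq_iff_real.mp hreal
    exact ⟨ξ, (ofReal_mem_complexRoots hp).mp hz, by rwa [dist_comm, hdist] at htz⟩
  · exact huniq ξ ((ofReal_mem_complexRoots hp).mpr hξ)

theorem eventually_eq_of_dist_lt {M : Type*} [MetricSpace M] (Z : Finset M) :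
    ∀ᶠ r in 𝓝[>] (0 : ℝ), ∀ z ∈ Z, ∀ z' ∈ Z, dist z z' < 2 * r → z = z' := by
  simp only [eventually_all_finset]
  intro z _ z' _
  rcases eq_or_ne z z' with rfl | hne
  · exact Eventually.of_forall fun _ _ => rfl
  · filter_upwards [Ioo_mem_nhdsGT (half_pos (dist_pos.mpr hne))] with r hr hlt
    linarith [hr.2]

theorem IsEquidegreeFamily.eventually_isRootPerturbation (hP : IsEquidegreeFamily P)
    (hcard : ∀ x y, (complexRoots (P x)).card = (complexRoots (P y)).card) (x₀ : X) :
    ∀ᶠ r in 𝓝[>] 0, ∀ᶠ x in 𝓝 x₀, IsRootPerturbation r (P x₀) (P x) := by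
  filter_upwards [eventually_eq_of_dist_lt (complexRoots (P x₀)), self_mem_nhdsWithin]
    with r hsep hr
  have hnear : ∀ᶠ x in 𝓝 x₀, ∀ z ∈ complexRoots (P x₀), ∃ w ∈ complexRoots (P x), dist w z < r :=
    (eventually_all_finset _).mpr fun z hz => hP.eventually_exists_mem_complexRoots hz hr
  filter_upwards [hnear] with x hx
  exact isRootPerturbation_of_complexRoots (hP.ne_zero x₀) (hP.ne_zero x) hsep hx (hcard x x₀).le

/-- Sample points for the complements of the real root sets of all `q` with
`IsRootPerturbation r p q`: the ends of the `r`-neighbourhoods of the roots of `p`. The point `0`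
serves the case without real roots. -/
noncomputable def samplePoints (r : ℝ) (p : ℝ[X]) : Finset ℝ :=
  insert 0 (p.roots.toFinset.image (· + r) ∪ p.roots.toFinset.image (· - r))

/-- Let `ξ` be the root of `p` nearest to `t` and `s` the root of `q` near `ξ`. From `t`, move to
the end of the `r`-neighbourhood of `ξ` that lies on the same side of `s` as `t`. A root of `q` met
on the way would be near another root of `p`, either nearer to `t` than `ξ` or too close to `ξ`. -/
theorem IsRootPerturbation.exists_mem_samplePoints {r : ℝ} {p q : ℝ[X]}
    (h : IsRootPerturbation r p q) (hr : 0 < r) (hp : p ≠ 0) (hq : q ≠ 0) {t : ℝ}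
    (ht : ¬q.IsRoot t) :
    ∃ m ∈ samplePoints r p, ¬p.IsRoot m ∧ ∀ u ∈ Set.uIcc t m, ¬q.IsRoot u := by
  rcases p.roots.toFinset.eq_empty_or_nonempty with hempty | hne
  · have hroot (ξ : ℝ) : ¬p.IsRoot ξ := fun hξ => by
      have : ξ ∈ p.roots.toFinset := by simp [hp, hξ.eq_zero]
      simp [hempty] at this
    refine ⟨0, Finset.mem_insert_self _ _, hroot 0, fun u _ hu => ?_⟩
    obtain ⟨ξ, hξ, -⟩ := h.exists_isRoot_left u hu
    exact hroot ξ hξ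
  obtain ⟨ξ, hξ, hmin⟩ := Finset.exists_min_image _ (fun η => |t - η|) hne
  simp only [Multiset.mem_toFinset, mem_roots hp] at hξ hmin
  obtain ⟨s, hs, hsξ⟩ := h.exists_isRoot_right ξ hξ
  have hst : s ≠ t := fun hst => ht (hst ▸ hs)
  have hroot (u : ℝ) (hu : q.IsRoot u) :
      u = s ∨ ∃ η, |t - ξ| ≤ |t - η| ∧ 2 * r ≤ |ξ - η| ∧ |u - η| < r := by
    obtain ⟨η, hη, huη⟩ := h.exists_isRoot_left u hu
    rcases eq_or_ne ξ η with rfl | hξη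
    · exact Or.inl (h.root_unique hq hξ hu hs huη hsξ)
    · exact Or.inr ⟨η, hmin η hη, not_lt.mp fun hlt => hξη (h.eq_of_dist_lt ξ hξ η hη hlt), huη⟩
  have hnot (m : ℝ) (hm : |ξ - m| = r) : ¬p.IsRoot m := fun hpm => by
    have := h.eq_of_dist_lt ξ hξ m hpm (by rw [Real.dist_eq]; linarith)
    simp [this, hr.ne] at hm
  rw [Real.dist_eq, abs_lt] at hsξ
  rcases hst.lt_or_gt with hlt | hgt
  · refine ⟨ξ + r, by simp [samplePoints, hp, hξ.eq_zero], hnot _ (by simp [hr.le]), ?_⟩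
    intro u hu hqu
    rw [Set.mem_uIcc] at hu
    rcases hroot u hqu with rfl | ⟨η, hηt, hηξ, huη⟩ <;> grind
  · refine ⟨ξ - r, by simp [samplePoints, hp, hξ.eq_zero], hnot _ (by simp [hr.le]), ?_⟩
    intro u hu hqu
    rw [Set.mem_uIcc] at hu
    rcases hroot u hqu with rfl | ⟨η, hηt, hηξ, huη⟩ <;> grind

end RootPerturbation

/-! ## Cylinders over connected sets -/

section Delineated

open Polynomial Filter Topology SignType

/-- The family `p` of finite systems of polynomials is delineated by `P`: the number of complex
roots of `P x` does not depend on `x`, and each member of the system is identically zero or is an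
equidegree family of divisors of `P`. -/
structure IsDelineated {ι X : Type*} [TopologicalSpace X] (p : ι → X → ℝ[X]) (P : X → ℝ[X]) :
    Prop where
  isEquidegreeFamily : IsEquidegreeFamily P
  card_complexRoots_eq : ∀ x y, (complexRoots (P x)).card = (complexRoots (P y)).card
  zero_or_dvd : ∀ i, (∀ x, p i x = 0) ∨ IsEquidegreeFamily (p i) ∧ ∀ x, p i x ∣ P x

theorem sign_eval_eq_of_forall_not_isRoot {f : ℝ[X]} {a b : ℝ}
    (h : ∀ u ∈ Set.uIcc a b, ¬f.IsRoot u) : sign (f.eval a) = sign (f.eval b) := by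
  have hcont : ContinuousOn (fun u => sign (f.eval u)) (Set.uIcc a b) := fun u hu =>
    ((continuousAt_sign_of_ne_zero (h u hu)).comp (f := fun u => f.eval u)
      f.continuous.continuousAt).continuousWithinAt
  exact Set.ordConnected_uIcc.isPreconnected.constant hcont Set.left_mem_uIcc Set.right_mem_uIcc

theorem IsEquidegreeFamily.eventually_sign_eval_eq {X : Type*} [TopologicalSpace X]
    {p : X → ℝ[X]} (hp : IsEquidegreeFamily p) {x₀ : X} {t₀ : ℝ} (h : ¬(p x₀).IsRoot t₀) :
    ∀ᶠ q in 𝓝 (x₀, t₀), sign ((p q.1).eval q.2) = sign ((p x₀).eval t₀) := by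
  have hcont : Continuous fun q : X × ℝ => (p q.1).eval q.2 := by
    simpa only [coe_aeval_eq_eval] using hp.continuous_aeval (L := ℝ)
  have hsign : ContinuousAt (fun q : X × ℝ => sign ((p q.1).eval q.2)) (x₀, t₀) :=
    (continuousAt_sign_of_ne_zero h).comp (f := fun q : X × ℝ => (p q.1).eval q.2)
      hcont.continuousAt
  exact hsign.eventually_mem (mem_nhds_discrete.mpr rfl : {_} ∈ 𝓝 _)

namespace IsDelineated

variable {ι X : Type*} [TopologicalSpace X] {p : ι → X → ℝ[X]} {P : X → ℝ[X]}

theorem sign_eval_eq_of_forall_not_isRoot (h : IsDelineated p P) {x : X} {a b : ℝ}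
    (hroot : ∀ u ∈ Set.uIcc a b, ¬(P x).IsRoot u) (i : ι) :
    sign ((p i x).eval a) = sign ((p i x).eval b) := by
  rcases h.zero_or_dvd i with hzero | ⟨-, hdvd⟩
  · rw [hzero x, eval_zero, eval_zero]
  · exact _root_.sign_eval_eq_of_forall_not_isRoot fun u hu hui =>
      hroot u hu (hui.dvd (hdvd x))

variable [Finite ι]

theorem eventually_sign_eval_eq (h : IsDelineated p P) {x₀ : X} {t₀ : ℝ}
    (ht₀ : ¬(P x₀).IsRoot t₀) :
    ∀ᶠ x in 𝓝 x₀, ∀ i, sign ((p i x).eval t₀) = sign ((p i x₀).eval t₀) := by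
  refine eventually_all.mpr fun i => ?_
  rcases h.zero_or_dvd i with hzero | ⟨hp, hdvd⟩
  · simp only [hzero, eventually_true]
  · exact (Continuous.prodMk_left t₀).continuousAt.eventually
      (hp.eventually_sign_eval_eq fun hroot => ht₀ (hroot.dvd (hdvd x₀)))

/-- A member of the system vanishing at the root `ξ` keeps a complex root near `ξ`, which can only
be the unique root of `P x` there. -/
theorem eventually_sign_eval_eq_of_isRoot (h : IsDelineated p P) {x₀ : X} {ξ : ℝ}
    (hξ : (P x₀).IsRoot ξ) :
    ∀ᶠ r in 𝓝[>] 0, ∀ᶠ x in 𝓝 x₀, ∀ i, ∀ t, (P x).IsRoot t → dist t ξ < r →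
      sign ((p i x).eval t) = sign ((p i x₀).eval ξ) := by
  have hP := h.isEquidegreeFamily
  simp only [eventually_all]
  intro i
  rcases h.zero_or_dvd i with hzero | ⟨hp, hdvd⟩
  · simp [hzero]
  by_cases hpξ : (p i x₀).IsRoot ξ
  · filter_upwards [hP.eventually_isRootPerturbation h.card_complexRoots_eq x₀,
      self_mem_nhdsWithin] with r hpert hr
    have hξ' := (ofReal_mem_complexRoots (hp.ne_zero x₀)).mpr hpξ
    filter_upwards [hpert, hp.eventually_exists_mem_complexRoots hξ' hr] with x hx hw t ht htξ
    obtain ⟨w, hw, hwξ⟩ := hw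
    have hwP : w ∈ complexRoots (P x) := by
      rw [mem_complexRoots (hP.ne_zero x)]
      exact aeval_eq_zero_of_dvd_aeval_eq_zero (hdvd x) ((mem_complexRoots (hp.ne_zero x)).mp hw)
    obtain rfl : w = t := hx.complexRoot_unique ξ hξ w hwP t
      ((ofReal_mem_complexRoots (hP.ne_zero x)).mpr ht) hwξ
      (by rwa [Complex.isometry_ofReal.dist_eq])
    rw [(ofReal_mem_complexRoots (hp.ne_zero x)).mp hw, hpξ.eq_zero]
  · filter_upwards [eventually_forall_dist_lt (hp.eventually_sign_eval_eq hpξ)] with r hr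
    filter_upwards [hr] with x hx t _ htξ
    exact hx t htξ

theorem eventually_exists_dist_lt (h : IsDelineated p P) (x₀ : X) (t₀ : ℝ) {r : ℝ} (hr : 0 < r) :
    ∀ᶠ x in 𝓝 x₀, ∃ t, dist t t₀ < r ∧ ∀ i, sign ((p i x).eval t) = sign ((p i x₀).eval t₀) := by
  by_cases ht₀ : (P x₀).IsRoot t₀
  · obtain ⟨r', hsign, hpert, hr'⟩ := ((h.eventually_sign_eval_eq_of_isRoot ht₀).and
      ((h.isEquidegreeFamily.eventually_isRootPerturbation h.card_complexRoots_eq x₀).and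
        (Ioo_mem_nhdsGT hr))).exists
    filter_upwards [hsign, hpert] with x hx hxpert
    obtain ⟨t, ht, htt₀⟩ := hxpert.exists_isRoot_right t₀ ht₀
    exact ⟨t, htt₀.trans hr'.2, fun i => hx i t ht htt₀⟩
  · filter_upwards [h.eventually_sign_eval_eq ht₀] with x hx
    exact ⟨t₀, by rwa [dist_self], hx⟩

theorem eventually_forall_exists_sign_eval_eq (h : IsDelineated p P) (x₀ : X) :
    ∀ᶠ x in 𝓝 x₀, ∀ t, ∃ t', ∀ i, sign ((p i x).eval t) = sign ((p i x₀).eval t') := by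
  have hP := h.isEquidegreeFamily
  have hroots : ∀ᶠ r in 𝓝[>] 0, ∀ ξ ∈ (P x₀).roots.toFinset, ∀ᶠ x in 𝓝 x₀, ∀ i, ∀ t,
      (P x).IsRoot t → dist t ξ < r → sign ((p i x).eval t) = sign ((p i x₀).eval ξ) :=
    (eventually_all_finset _).mpr fun ξ hξ => h.eventually_sign_eval_eq_of_isRoot
      (isRoot_of_mem_roots (Multiset.mem_toFinset.mp hξ))
  obtain ⟨r, hsign, hpert, hr : 0 < r⟩ := (hroots.and
    ((hP.eventually_isRootPerturbation h.card_complexRoots_eq x₀).and self_mem_nhdsWithin)).exists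
  have hsamples : ∀ᶠ x in 𝓝 x₀, ∀ m ∈ samplePoints r (P x₀), ¬(P x₀).IsRoot m →
      ∀ i, sign ((p i x).eval m) = sign ((p i x₀).eval m) := by
    refine (eventually_all_finset _).mpr fun m _ => ?_
    simp only [eventually_imp_distrib_left]
    exact h.eventually_sign_eval_eq
  filter_upwards [(eventually_all_finset _).mpr hsign, hpert, hsamples] with x hx hxpert hxm t
  by_cases ht : (P x).IsRoot t
  · obtain ⟨ξ, hξ, htξ⟩ := hxpert.exists_isRoot_left t ht
    exact ⟨ξ, fun i => hx ξ (by simpa [hP.ne_zero x₀] using hξ) i t ht htξ⟩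
  · obtain ⟨m, hm, hmP, htm⟩ := hxpert.exists_mem_samplePoints hr (hP.ne_zero x₀) (hP.ne_zero x) ht
    exact ⟨m, fun i => (h.sign_eval_eq_of_forall_not_isRoot htm i).trans (hxm m hm hmP i)⟩

variable [PreconnectedSpace X]

theorem isPreconnected_setOf_sign_eval_eq (h : IsDelineated p P)
    (hder : ∀ i, ∃ j, ∀ x, p j x = derivative (p i x)) (ε : ι → SignType) :
    IsPreconnected {q : X × ℝ | ∀ i, sign ((p i q.1).eval q.2) = ε i} := by
  refine isPreconnected_of_forall_fiber (fun x₀ t₀ ht₀ r hr => ?_) (fun x₀ => ?_) fun x => ?_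
  · filter_upwards [h.eventually_exists_dist_lt x₀ t₀ hr] with x hx
    obtain ⟨t, htt₀, ht⟩ := hx
    exact ⟨t, htt₀, fun i => (ht i).trans (ht₀ i)⟩
  · filter_upwards [h.eventually_forall_exists_sign_eval_eq x₀] with x hx t ht
    obtain ⟨t', ht'⟩ := hx t
    exact ⟨t', fun i => (ht' i).symm.trans (ht i)⟩
  · have hclosed : ∀ g ∈ Set.range (p · x), derivative g ∈ Set.range (p · x) := by
      rintro _ ⟨i, rfl⟩
      obtain ⟨j, hj⟩ := hder i
      exact ⟨j, hj x⟩
    refine (Set.ordConnected_iff.mpr fun s hs t ht _ u hu i => ?_).isPreconnected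
    have hst : ∀ g ∈ Set.range (p · x), sign (g.eval s) = sign (g.eval t) := by
      rintro _ ⟨j, rfl⟩
      exact (hs j).trans (ht j).symm
    exact (thom_sign_eval_eq hclosed hst hu ⟨i, rfl⟩).trans (hs i)

end IsDelineated

end Delineated

/-! ## Projection and induction on the dimension -/

section Projection

open Polynomial

variable {R : Type*} [CommRing R]

theorem map_eq_zero_or_isEquidegreeFamily {X : Type*} [TopologicalSpace X] {φ : X → R →+* ℝ}
    (hφ : ∀ a, Continuous fun x => φ x a) {f : R[X]}
    (hf : ∀ a ∈ f.coeffs, ∀ x y, φ x a = 0 ↔ φ y a = 0) :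
    (∀ x, f.map (φ x) = 0) ∨ IsEquidegreeFamily fun x => f.map (φ x) := by
  have hsupp (x y : X) : (f.map (φ x)).support = (f.map (φ y)).support := by
    ext k
    rw [mem_support_iff, mem_support_iff, coeff_map, coeff_map]
    by_cases hk : f.coeff k = 0
    · rw [hk, map_zero, map_zero]
    · exact not_congr (hf _ (coeff_mem_coeffs hk) x y)
  refine or_iff_not_imp_left.mpr fun hne => ?_
  push Not at hne
  obtain ⟨x₀, hx₀⟩ := hne
  refine ⟨fun k => by simpa only [coeff_map] using hφ (f.coeff k), fun x => ?_, fun x y => ?_⟩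
  · rwa [← support_nonempty, hsupp x x₀, support_nonempty]
  · exact natDegree_eq_of_degree_eq (congrArg Finset.max (hsupp x y))

theorem isEquidegreeFamily_map_prod {X : Type*} [TopologicalSpace X] {φ : X → R →+* ℝ}
    (hφ : ∀ a, Continuous fun x => φ x a) {G : Finset R[X]}
    (hG : ∀ f ∈ G, IsEquidegreeFamily fun x => f.map (φ x)) :
    IsEquidegreeFamily fun x => (∏ f ∈ G, f).map (φ x) := by
  have hne (x : X) : ∀ f ∈ G, f.map (φ x) ≠ 0 := fun f hf => (hG f hf).ne_zero x
  refine ⟨fun k => by simpa only [coeff_map] using hφ ((∏ f ∈ G, f).coeff k), fun x => ?_,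
    fun x y => ?_⟩
  · rw [Polynomial.map_prod]
    exact Finset.prod_ne_zero_iff.mpr (hne x)
  · rw [Polynomial.map_prod, Polynomial.map_prod, natDegree_prod _ _ (hne x),
      natDegree_prod _ _ (hne y)]
    exact Finset.sum_congr rfl fun f hf => (hG f hf).natDegree_eq x y

/-- The coefficients of the members of `F`, whose vanishing determines their degrees, together with
the Gram determinants whose vanishing determines the number of complex roots of each partial
product. Partial products are needed because members of `F` may vanish identically. -/
noncomputable def projectionFamily [DecidableEq R] (F : Finset R[X]) : Finset R :=
  F.biUnion coeffs ∪ F.powerset.biUnion fun G =>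
    (Finset.range ((∏ f ∈ G, f).natDegree + 1)).image (syzygyGram (∏ f ∈ G, f))

theorem exists_isDelineated [DecidableEq R] {X : Type*} [TopologicalSpace X] {φ : X → R →+* ℝ}
    (hφ : ∀ a, Continuous fun x => φ x a) {F : Finset R[X]}
    (hF : ∀ a ∈ projectionFamily F, ∀ x y, φ x a = 0 ↔ φ y a = 0) :
    ∃ P, IsDelineated (fun (f : F) x => f.1.map (φ x)) P := by
  classical
  have hdich (f) (hf : f ∈ F) :
      (∀ x, f.map (φ x) = 0) ∨ IsEquidegreeFamily fun x => f.map (φ x) :=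
    map_eq_zero_or_isEquidegreeFamily hφ fun a ha =>
      hF a (Finset.mem_union_left _ (Finset.mem_biUnion.mpr ⟨f, hf, ha⟩))
  let G := F.filter fun f => IsEquidegreeFamily fun x => f.map (φ x)
  have hprod := isEquidegreeFamily_map_prod hφ (G := G) fun f hf => (Finset.mem_filter.mp hf).2
  refine ⟨_, hprod, fun x y => ?_, fun f => (hdich f f.2).imp_right fun hf => ⟨hf, fun x => ?_⟩⟩
  · refine card_complexRoots_eq_of_syzygyGram (hprod.ne_zero x) (hprod.ne_zero y) fun r hr =>
      hF _ (Finset.mem_union_right _ (Finset.mem_biUnion.mpr ⟨G, ?_, ?_⟩)) x y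
    · exact Finset.mem_powerset.mpr (Finset.filter_subset _ _)
    · exact Finset.mem_image_of_mem _ (Finset.mem_range.mpr (Nat.lt_succ_of_le hr))
  · exact Polynomial.map_dvd _ (Finset.dvd_prod_of_mem _ (Finset.mem_filter.mpr ⟨f.2, hf⟩))

theorem exists_finset_superset_derivative_mem {S : Type*} [Semiring S] (F : Finset S[X]) :
    ∃ F' : Finset S[X], F ⊆ F' ∧ ∀ f ∈ F', derivative f ∈ F' := by
  classical
  refine ⟨F.biUnion fun f => (Finset.range (f.natDegree + 2)).image (derivative^[·] f), ?_, ?_⟩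
  · intro f hf
    exact Finset.mem_biUnion.mpr ⟨f, hf, Finset.mem_image.mpr ⟨0, by simp, rfl⟩⟩
  · simp only [Finset.mem_biUnion, Finset.mem_image, Finset.mem_range]
    rintro _ ⟨f, hf, k, hk, rfl⟩
    refine ⟨f, hf, min (k + 1) (f.natDegree + 1), by omega, ?_⟩
    rcases le_or_gt k f.natDegree with hkd | hkd
    · rw [min_eq_left (by omega), Function.iterate_succ_apply']
    · rw [min_eq_right (by omega), iterate_derivative_eq_zero hkd,
        iterate_derivative_eq_zero (Nat.lt_succ_self _), derivative_zero]

end Projection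

section Induction

open MvPolynomial SignType

variable {n : ℕ}

theorem eval_map_eval_tail_finSuccEquiv (y : Fin (n + 1) → ℝ) (g : MvPolynomial (Fin (n + 1)) ℝ) :
    ((finSuccEquiv ℝ n g).map (eval (Fin.tail y))).eval (y 0) = eval y g := by
  rw [← eval_eq_eval_mv_eval', Fin.cons_self_tail]

/-- The part of the cylinder over `A` on which the members `f` of `F`, regarded as polynomials in
the coordinate `0` with coefficients in the remaining coordinates, have signs `ε f`. -/
def signCell (F : Finset (Polynomial (MvPolynomial (Fin n) ℝ))) (A : Set (Fin n → ℝ))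
    (ε : F → SignType) : Set (Fin (n + 1) → ℝ) :=
  {y | Fin.tail y ∈ A ∧ ∀ f : F, sign ((f.1.map (eval (Fin.tail y))).eval (y 0)) = ε f}

variable {F : Finset (Polynomial (MvPolynomial (Fin n) ℝ))} {A : Set (Fin n → ℝ)}

theorem isSemialgebraic_signCell (hA : IsSemialgebraic (Fin n) A) (ε : F → SignType) :
    IsSemialgebraic (Fin (n + 1)) (signCell F A ε) := by
  have hsign : IsSemialgebraic (Fin (n + 1))
      (⋂ f : F, {y | sign (eval y ((finSuccEquiv ℝ n).symm f)) = ε f}) :=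
    IsSemialgebraic.iInter fun f => IsSemialgebraic.setOf_sign_eval_eq _ _
  convert (hA.preimage_comp Fin.succ).inter hsign using 1
  ext y
  simp only [← eval_map_eval_tail_finSuccEquiv, AlgEquiv.apply_symm_apply, Set.mem_inter_iff,
    Set.mem_iInter]
  rfl

theorem isPreconnected_signCell [DecidableEq (MvPolynomial (Fin n) ℝ)] (hA : IsPreconnected A)
    (hF : SignInvariant (projectionFamily F) A) (hder : ∀ f ∈ F, Polynomial.derivative f ∈ F)
    (ε : F → SignType) : IsPreconnected (signCell F A ε) := by
  have : PreconnectedSpace A := isPreconnected_iff_preconnectedSpace.mp hA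
  obtain ⟨P, hP⟩ := exists_isDelineated (X := A) (φ := fun x => eval x.1) (F := F)
    (fun a => (continuous_eval a).comp continuous_subtype_val)
    fun a ha x y => hF.eval_eq_zero_iff ha x.2 y.2
  have hpre := hP.isPreconnected_setOf_sign_eval_eq
    (fun f => ⟨⟨_, hder f f.2⟩, fun x => (Polynomial.derivative_map _ _).symm⟩) ε
  have hcons : Continuous fun q : A × ℝ => (Fin.cons q.2 q.1.1 : Fin (n + 1) → ℝ) := by
    fun_prop
  convert hpre.image _ hcons.continuousOn using 1
  ext y
  constructor
  · rintro ⟨hy, hsign⟩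
    exact ⟨(⟨Fin.tail y, hy⟩, y 0), hsign, Fin.cons_self_tail y⟩
  · rintro ⟨⟨x, t⟩, hq, rfl⟩
    exact ⟨x.2, hq⟩

theorem exists_isCellCover_succ
    (ih : ∀ G : Finset (MvPolynomial (Fin n) ℝ), ∃ K, IsCellCover G K)
    (F : Finset (MvPolynomial (Fin (n + 1)) ℝ)) : ∃ K, IsCellCover F K := by
  classical
  obtain ⟨F', hFF', hder⟩ := exists_finset_superset_derivative_mem (F.image (finSuccEquiv ℝ n))
  obtain ⟨K, hK⟩ := ih (projectionFamily F')
  refine ⟨Set.image2 (signCell F') K Set.univ, hK.finite.image2 _ Set.finite_univ, ?_, ?_, ?_, ?_⟩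
  · rintro _ ⟨A, hA, ε, -, rfl⟩
    exact isSemialgebraic_signCell (hK.isSemialgebraic A hA) ε
  · rintro _ ⟨A, hA, ε, -, rfl⟩
    exact isPreconnected_signCell (hK.isPreconnected A hA) (hK.signInvariant A hA) hder ε
  · rintro _ ⟨A, -, ε, -, rfl⟩ f hf x hx y hy
    have hf' : finSuccEquiv ℝ n f ∈ F' := hFF' (Finset.mem_image_of_mem _ hf)
    rw [← eval_map_eval_tail_finSuccEquiv, ← eval_map_eval_tail_finSuccEquiv]
    exact (hx.2 ⟨_, hf'⟩).trans (hy.2 ⟨_, hf'⟩).symm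
  · intro y
    obtain ⟨A, hA, hyA⟩ := hK.exists_mem (Fin.tail y)
    exact ⟨_, ⟨A, hA, _, Set.mem_univ _, rfl⟩, hyA, fun f => rfl⟩

theorem exists_isCellCover (F : Finset (MvPolynomial (Fin n) ℝ)) : ∃ K, IsCellCover F K := by
  induction n with
  | zero =>
    refine ⟨{Set.univ}, Set.finite_singleton _, ?_, ?_, ?_, fun x => ⟨_, rfl, trivial⟩⟩
    · rintro _ rfl
      exact IsSemialgebraic.univ
    · rintro _ rfl
      exact isPreconnected_univ
    · rintro _ rfl f - x - y -
      rw [Subsingleton.elim x y]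
  | succ n ih => exact exists_isCellCover_succ ih F

end Induction

/-- The connected components of a semialgebraic set are semialgebraic, and
there are finitely many of them. -/
theorem semialgebraic_components (n : ℕ) (S : Set (Fin n → ℝ))
    (hS : IsSemialgebraic (Fin n) S) :
    (∀ x ∈ S, IsSemialgebraic (Fin n) (connectedComponentIn S x)) ∧
      {C : Set (Fin n → ℝ) | ∃ x ∈ S, C = connectedComponentIn S x}.Finite := by
  obtain ⟨F, hF⟩ := hS.exists_finset_subset_or_subset_compl
  obtain ⟨K, hK⟩ := exists_isCellCover F
  have hcomp := connectedComponentIn_eq_sUnion hK.isPreconnected hK.exists_mem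
    fun A hA => hF A (hK.signInvariant A hA)
  constructor
  · intro x _
    rw [hcomp x]
    exact IsSemialgebraic.sUnion (hK.finite.subset fun A hA => hA.1)
      fun A hA => hK.isSemialgebraic A hA.1
  · refine (hK.finite.finite_subsets.image Set.sUnion).subset ?_
    rintro _ ⟨x, -, rfl⟩
    exact ⟨_, fun A hA => hA.1, (hcomp x).symm⟩
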